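/- Let ν > 0, ξ > 0 and λ ∈ ℝ. Then the function u : (0,∞) → ℝ defined by u(x) = e^{−ξx²/2} · x^{1/2+ν} · M( −(λ − 2ξ(1+ν))/(4ξ), 1+ν, ξx² ) is twice differentiable and satisfies, for every x > 0, −u''(x) + ξ²x² u(x) + ((ν² − 1/4)/x²) u(x) = λ u(x). -/

import Mathlib

open MeasureTheory Real Set

/-- Pochhammer symbol (rising factorial) `(c)_k = c (c+1) ⋯ (c+k−1)`. -/
noncomputable def poch (c : ℝ) (k : ℕ) : ℝ := (ascPochhammer ℝ k).eval c

/-- Kummer's confluent hypergeometric function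
`M(a,b,z) = ∑_{k=0}^∞ ((a)_k / ((b)_k · k!)) z^k`. -/
noncomputable def kummerM (a b z : ℝ) : ℝ :=
  ∑' k : ℕ, poch a k / (poch b k * (Nat.factorial k : ℝ)) * z ^ k

/-!
The gauge factor `w(x) = e^{-ξx²/2} x^{1/2+ν}` satisfies `w' = p w` with
`p(x) = (1/2+ν)/x - ξx`, so `(w g)'' = w (g'' + 2 p g' + (p' + p²) g)`. For `g(x) = f(ξx²)` the
terms in `ξ²x²` and `1/x²` produced by `p' + p²` are exactly the potential of
`-d²/dx² + ξ²x² + (ν² - 1/4)/x²`, which therefore acts on `f` as `2ξ(1+ν) - 4ξ K`, where `K` is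
Kummer's operator `z f'' + (1 + ν - z) f'` in `z = ξx²`. Comparing coefficients of power series,
`M(a, 1+ν, ·)` is an eigenfunction of `K` with eigenvalue `a`, and `λ = 2ξ(1+ν) - 4ξa`.
-/

section PowerSeries

open Filter Asymptotics FormalMultilinearSeries

variable {𝕜 : Type*} [NontriviallyNormedField 𝕜]

theorem ofScalars_radius_eq_top_of_isLittleO {c : ℕ → 𝕜}
    (hc : (fun n ↦ c (n + 1)) =o[atTop] c) : (ofScalars 𝕜 c).radius = ⊤ := by
  refine radius_eq_top_of_summable_norm _ fun r ↦ ?_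
  simp only [ofScalars_norm]
  refine summable_of_ratio_norm_eventually_le (r := 1 / 2) (by norm_num) ?_
  have hε : (0 : ℝ) < 1 / (2 * (r + 1)) := by positivity
  filter_upwards [hc.def hε] with n hn
  rw [Real.norm_of_nonneg (by positivity), Real.norm_of_nonneg (by positivity)]
  calc ‖c (n + 1)‖ * (r : ℝ) ^ (n + 1)
      ≤ 1 / (2 * (r + 1)) * ‖c n‖ * ((r : ℝ) ^ n * (r + 1)) := by
        rw [pow_succ]; gcongr; linarith
    _ = 1 / 2 * (‖c n‖ * (r : ℝ) ^ n) := by field_simp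

theorem hasFPowerSeriesOnBall_ofScalars_tsum [CompleteSpace 𝕜] {c : ℕ → 𝕜}
    (hc : (fun n ↦ c (n + 1)) =o[atTop] c) :
    HasFPowerSeriesOnBall (fun z ↦ ∑' n, c n * z ^ n) (ofScalars 𝕜 c) 0 ⊤ := by
  have hr := ofScalars_radius_eq_top_of_isLittleO hc
  have h := (ofScalars 𝕜 c).hasFPowerSeriesOnBall (by simp [hr])
  rw [hr] at h
  convert! h using 1
  ext z
  simp only [← smul_eq_mul, ← ofScalars_sum_eq, ofScalarsSum]

variable {f : 𝕜 → 𝕜} {c : ℕ → 𝕜} {x z : 𝕜} {r : ENNReal}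

theorem hasSum_of_hasFPowerSeriesOnBall_ofScalars
    (h : HasFPowerSeriesOnBall f (ofScalars 𝕜 c) 0 r) (hz : z ∈ Metric.eball 0 r) :
    HasSum (fun n ↦ c n * z ^ n) (f z) := by
  simpa only [ofScalars_apply_eq, smul_eq_mul, zero_add] using h.hasSum hz

theorem formalMultilinearSeries_eq_of_coeff_eq {E : Type*} [NormedAddCommGroup E]
    [NormedSpace 𝕜 E] {p q : FormalMultilinearSeries 𝕜 𝕜 E}
    (h : ∀ n, p.coeff n = q.coeff n) : p = q :=
  funext fun n ↦ by rw [← p.mkPiRing_coeff_eq, h, q.mkPiRing_coeff_eq]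

theorem hasFPowerSeriesOnBall_deriv_ofScalars [CompleteSpace 𝕜]
    (h : HasFPowerSeriesOnBall f (ofScalars 𝕜 c) x r) :
    HasFPowerSeriesOnBall (deriv f) (ofScalars 𝕜 fun n ↦ (n + 1) * c (n + 1)) x r := by
  have hseries : (ContinuousLinearMap.apply 𝕜 𝕜 (1 : 𝕜)).compFormalMultilinearSeries
      (ofScalars 𝕜 c).derivSeries = ofScalars 𝕜 fun n ↦ (n + 1) * c (n + 1) := by
    refine formalMultilinearSeries_eq_of_coeff_eq fun n ↦ ?_
    calc _ = (ofScalars 𝕜 c).derivSeries.coeff n 1 := rfl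
      _ = _ := by simp only [derivSeries_coeff_one, coeff_ofScalars, nsmul_eq_mul, Nat.cast_succ]
  rw [← hseries]
  exact (ContinuousLinearMap.apply 𝕜 𝕜 (1 : 𝕜)).comp_hasFPowerSeriesOnBall h.fderiv

theorem hasSum_mul_deriv_of_hasFPowerSeriesOnBall_ofScalars [CompleteSpace 𝕜]
    (h : HasFPowerSeriesOnBall f (ofScalars 𝕜 c) 0 r) (hz : z ∈ Metric.eball 0 r) :
    HasSum (fun n ↦ n * c n * z ^ n) (z * deriv f z) := by
  rw [← hasSum_nat_add_iff' 1]
  have hderiv := hasSum_of_hasFPowerSeriesOnBall_ofScalars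
    (hasFPowerSeriesOnBall_deriv_ofScalars h) hz
  convert! hderiv.mul_left z using 1
  · ext n
    push_cast
    ring
  · simp only [Finset.sum_range_one, Nat.cast_zero, zero_mul, sub_zero]

end PowerSeries

section KummerFunction

open Filter Topology Asymptotics FormalMultilinearSeries

variable {a b : ℝ}

/-- The coefficient `(a)_k / ((b)_k k!)` of `z ^ k` in the Kummer function `M(a, b, z)`. It is `0`
for `k > n` when `b = -n` with `n : ℕ`. -/
noncomputable def kummerCoeff (a b : ℝ) (k : ℕ) : ℝ := poch a k / (poch b k * (Nat.factorial k : ℝ))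

theorem kummerCoeff_succ (a b : ℝ) (n : ℕ) :
    kummerCoeff a b (n + 1) = (a + n) / ((b + n) * (n + 1)) * kummerCoeff a b n := by
  simp only [kummerCoeff, poch, ascPochhammer_succ_eval, Nat.factorial_succ, Nat.cast_mul,
    Nat.cast_succ, div_mul_div_comm]
  congr 1 <;> ring

theorem kummerCoeff_succ_isLittleO (a b : ℝ) :
    (fun n ↦ kummerCoeff a b (n + 1)) =o[atTop] kummerCoeff a b := by
  refine isLittleO_iff_exists_eq_mul.2
    ⟨fun n : ℕ ↦ (a + n) / ((b + n) * (n + 1)), ?_, .of_forall (kummerCoeff_succ a b)⟩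
  have hratio : Tendsto (fun n : ℕ ↦ (a + n : ℝ) / (b + n)) atTop (𝓝 1) := by
    simpa using tendsto_add_mul_div_add_mul_atTop_nhds a b 1 (one_ne_zero (α := ℝ))
  simpa only [div_mul_div_comm, mul_one, mul_zero] using
    hratio.mul (tendsto_one_div_add_atTop_nhds_zero_nat (𝕜 := ℝ))

theorem hasFPowerSeriesOnBall_kummerM (a b : ℝ) :
    HasFPowerSeriesOnBall (kummerM a b) (ofScalars ℝ (kummerCoeff a b)) 0 ⊤ :=
  hasFPowerSeriesOnBall_ofScalars_tsum (kummerCoeff_succ_isLittleO a b)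

theorem analyticAt_kummerM (a b z : ℝ) : AnalyticAt ℝ (kummerM a b) z :=
  (hasFPowerSeriesOnBall_kummerM a b).analyticAt_of_mem (by simp)

/-- Kummer's differential operator `f ↦ z f'' + (b - z) f'`. -/
noncomputable def kummerOperator (b : ℝ) (f : ℝ → ℝ) (z : ℝ) : ℝ :=
  z * deriv (deriv f) z + (b - z) * deriv f z

theorem kummerOperator_kummerM (hb : ∀ n : ℕ, b ≠ -n) (z : ℝ) :
    kummerOperator b (kummerM a b) z = a * kummerM a b z := by
  have hz : z ∈ Metric.eball (0 : ℝ) ⊤ := by simp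
  have hM := hasFPowerSeriesOnBall_kummerM a b
  have hM' := hasFPowerSeriesOnBall_deriv_ofScalars hM
  have hlhs := (hasSum_mul_deriv_of_hasFPowerSeriesOnBall_ofScalars hM' hz).add
    ((hasSum_of_hasFPowerSeriesOnBall_ofScalars hM' hz).mul_left b)
  have hrhs := (hasSum_mul_deriv_of_hasFPowerSeriesOnBall_ofScalars hM hz).add
    ((hasSum_of_hasFPowerSeriesOnBall_ofScalars hM hz).mul_left a)
  have hsum : z * deriv (deriv (kummerM a b)) z + b * deriv (kummerM a b) z =
      z * deriv (kummerM a b) z + a * kummerM a b z := by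
    refine hlhs.unique (hrhs.congr_fun fun n ↦ ?_)
    have hbn : b + n ≠ 0 := fun h ↦ hb n (eq_neg_of_add_eq_zero_left h)
    rw [kummerCoeff_succ]
    field_simp
    ring
  rw [kummerOperator]
  linear_combination hsum

end KummerFunction

section SecondDerivatives

open Topology

variable {𝕜 : Type*} [NontriviallyNormedField 𝕜]

theorem deriv_deriv_mul_of_deriv_eq_mul {w p g : 𝕜 → 𝕜} {p' g'' x : 𝕜}
    (hw : ∀ᶠ y in 𝓝 x, HasDerivAt w (w y * p y) y) (hp : HasDerivAt p p' x)
    (hg : ∀ᶠ y in 𝓝 x, DifferentiableAt 𝕜 g y) (hg' : HasDerivAt (deriv g) g'' x) :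
    deriv (deriv fun y ↦ w y * g y) x =
      w x * (g'' + 2 * p x * deriv g x + (p' + p x ^ 2) * g x) := by
  have hderiv : deriv (fun y ↦ w y * g y) =ᶠ[𝓝 x] fun y ↦ w y * (p y * g y + deriv g y) := by
    filter_upwards [hw, hg] with y hwy hgy
    rw [(hwy.fun_mul hgy.hasDerivAt).deriv]
    ring
  rw [hderiv.deriv_eq, (hw.self_of_nhds.fun_mul
    ((hp.fun_mul hg.self_of_nhds.hasDerivAt).fun_add hg')).deriv]
  ring

variable {f : 𝕜 → 𝕜} {ξ x : 𝕜}

theorem hasDerivAt_comp_const_mul_sq (hf : DifferentiableAt 𝕜 f (ξ * x ^ 2)) :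
    HasDerivAt (fun y ↦ f (ξ * y ^ 2)) (deriv f (ξ * x ^ 2) * (2 * ξ * x)) x := by
  have hsq : HasDerivAt (fun y ↦ ξ * y ^ 2) (2 * ξ * x) x :=
    ((hasDerivAt_pow 2 x).const_mul ξ).congr_deriv (by push_cast; ring)
  exact hf.hasDerivAt.comp x hsq

theorem eventually_differentiableAt_const_mul_sq
    (hf : ∀ᶠ z in 𝓝 (ξ * x ^ 2), DifferentiableAt 𝕜 f z) :
    ∀ᶠ y in 𝓝 x, DifferentiableAt 𝕜 f (ξ * y ^ 2) :=
  (show Continuous fun y ↦ ξ * y ^ 2 by fun_prop).continuousAt.eventually hf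

theorem hasDerivAt_deriv_comp_const_mul_sq (hf : ∀ᶠ z in 𝓝 (ξ * x ^ 2), DifferentiableAt 𝕜 f z)
    (hf' : DifferentiableAt 𝕜 (deriv f) (ξ * x ^ 2)) :
    HasDerivAt (deriv fun y ↦ f (ξ * y ^ 2))
      (4 * ξ ^ 2 * x ^ 2 * deriv (deriv f) (ξ * x ^ 2) + 2 * ξ * deriv f (ξ * x ^ 2)) x := by
  have hderiv : (deriv fun y ↦ f (ξ * y ^ 2)) =ᶠ[𝓝 x]
      fun y ↦ deriv f (ξ * y ^ 2) * (2 * ξ * y) := by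
    filter_upwards [eventually_differentiableAt_const_mul_sq hf] with y hy
    exact (hasDerivAt_comp_const_mul_sq hy).deriv
  refine (((hasDerivAt_comp_const_mul_sq hf').fun_mul
    ((hasDerivAt_id' x).const_mul (2 * ξ))).congr_deriv ?_).congr_of_eventuallyEq hderiv
  ring

end SecondDerivatives

section RadialOscillator

open Topology

variable {ν ξ x : ℝ} {f : ℝ → ℝ}

/-- The radial harmonic oscillator `u ↦ -u'' + ξ²x² u + ((ν² - 1/4)/x²) u`. -/
noncomputable def radialOscillator (ν ξ : ℝ) (u : ℝ → ℝ) (x : ℝ) : ℝ :=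
  -deriv (deriv u) x + ξ ^ 2 * x ^ 2 * u x + ((ν ^ 2 - 1 / 4) / x ^ 2) * u x

/-- The gauge factor `e^{-ξx²/2} x^{1/2+ν}`: conjugating the radial oscillator by it turns the
potential into a constant. For `x < 0` the power takes the conventional value of `Real.rpow`. -/
noncomputable def oscillatorGauge (ν ξ x : ℝ) : ℝ :=
  Real.exp (-ξ * x ^ 2 / 2) * x ^ ((1 : ℝ) / 2 + ν)

/-- The ansatz `u(x) = e^{-ξx²/2} x^{1/2+ν} f(ξx²)`, which turns a function `f` of `z = ξx²` into
a function of the radial variable `x`. -/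
noncomputable def oscillatorAnsatz (ν ξ : ℝ) (f : ℝ → ℝ) (x : ℝ) : ℝ :=
  oscillatorGauge ν ξ x * f (ξ * x ^ 2)

theorem hasDerivAt_oscillatorGauge (hx : x ≠ 0) :
    HasDerivAt (oscillatorGauge ν ξ) (oscillatorGauge ν ξ x * ((1 / 2 + ν) / x - ξ * x)) x := by
  have hexponent : HasDerivAt (fun y : ℝ ↦ -ξ * y ^ 2 / 2) (-ξ * x) x :=
    (((hasDerivAt_pow 2 x).const_mul (-ξ)).div_const 2).congr_deriv (by push_cast; ring)
  refine (hexponent.exp.mul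
    (Real.hasDerivAt_rpow_const (p := 1 / 2 + ν) (.inl hx))).congr_deriv ?_
  rw [Real.rpow_sub_one hx, oscillatorGauge]
  ring

theorem analyticAt_oscillatorAnsatz (hx : x ≠ 0) (hf : AnalyticAt ℝ f (ξ * x ^ 2)) :
    AnalyticAt ℝ (oscillatorAnsatz ν ξ f) x := by
  have hrpow : AnalyticAt ℝ (fun y : ℝ ↦ y ^ ((1 : ℝ) / 2 + ν)) x :=
    (Real.contDiffAt_rpow_const_of_ne hx).analyticAt
  have hcomp : AnalyticAt ℝ (fun y ↦ f (ξ * y ^ 2)) x :=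
    hf.fun_comp (f := fun y ↦ ξ * y ^ 2) (by fun_prop)
  have hexp : AnalyticAt ℝ (fun y : ℝ ↦ Real.exp (-ξ * y ^ 2 / 2)) x := by fun_prop
  exact (hexp.fun_mul hrpow).fun_mul hcomp

theorem radialOscillator_oscillatorAnsatz (hx : x ≠ 0)
    (hf : ∀ᶠ z in 𝓝 (ξ * x ^ 2), DifferentiableAt ℝ f z)
    (hf' : DifferentiableAt ℝ (deriv f) (ξ * x ^ 2)) :
    radialOscillator ν ξ (oscillatorAnsatz ν ξ f) x =
      oscillatorGauge ν ξ x *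
        (2 * ξ * (1 + ν) * f (ξ * x ^ 2) - 4 * ξ * kummerOperator (1 + ν) f (ξ * x ^ 2)) := by
  have hgauge : ∀ᶠ y in 𝓝 x, HasDerivAt (oscillatorGauge ν ξ)
      (oscillatorGauge ν ξ y * ((1 / 2 + ν) / y - ξ * y)) y :=
    (eventually_ne_nhds hx).mono fun _ ↦ hasDerivAt_oscillatorGauge
  have hlogDeriv : HasDerivAt (fun y ↦ (1 / 2 + ν) / y - ξ * y) (-(1 / 2 + ν) / x ^ 2 - ξ) x :=
    (((hasDerivAt_inv hx).const_mul (1 / 2 + ν)).fun_sub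
      ((hasDerivAt_id' x).const_mul ξ)).congr_deriv (by ring)
  have hcomp : ∀ᶠ y in 𝓝 x, DifferentiableAt ℝ (fun y ↦ f (ξ * y ^ 2)) y :=
    (eventually_differentiableAt_const_mul_sq hf).mono fun _ hy ↦
      (hasDerivAt_comp_const_mul_sq hy).differentiableAt
  have hdderiv : deriv (deriv (oscillatorAnsatz ν ξ f)) x = _ :=
    deriv_deriv_mul_of_deriv_eq_mul hgauge hlogDeriv hcomp
      (hasDerivAt_deriv_comp_const_mul_sq hf hf')
  rw [radialOscillator, hdderiv, (hasDerivAt_comp_const_mul_sq hf.self_of_nhds).deriv,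
    oscillatorAnsatz, kummerOperator]
  field_simp
  ring

end RadialOscillator

theorem kummer_ansatz_solves_eigenvalue_equation_general (ν ξ lam : ℝ)
    (hν : ∀ n : ℕ, 1 + ν ≠ -n) (hξ : ξ ≠ 0) {x : ℝ} (hx : 0 < x) :
    let u := oscillatorAnsatz ν ξ (kummerM (-((lam - 2 * ξ * (1 + ν)) / (4 * ξ))) (1 + ν))
    AnalyticAt ℝ u x ∧ radialOscillator ν ξ u x = lam * u x := by
  have hM := analyticAt_kummerM (-((lam - 2 * ξ * (1 + ν)) / (4 * ξ))) (1 + ν) (ξ * x ^ 2)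
  refine ⟨analyticAt_oscillatorAnsatz hx.ne' hM, ?_⟩
  rw [radialOscillator_oscillatorAnsatz hx.ne'
    (hM.eventually_analyticAt.mono fun _ h ↦ h.differentiableAt) hM.deriv.differentiableAt,
    kummerOperator_kummerM hν, oscillatorAnsatz]
  field_simp
  ring

/-- For `ν > 0`, `ξ > 0` and `λ ∈ ℝ`, the function
`u(x) = e^{−ξx²/2} x^{1/2+ν} M(−(λ − 2ξ(1+ν))/(4ξ), 1+ν, ξx²)` is twice differentiable
on `(0,∞)` and satisfies `−u'' + ξ²x²u + ((ν²−1/4)/x²)u = λu` for every `x > 0`. -/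
theorem kummer_ansatz_solves_eigenvalue_equation (ν ξ lam : ℝ) (hν : 0 < ν) (hξ : 0 < ξ) :
    (∀ x : ℝ, 0 < x → DifferentiableAt ℝ
      (fun y : ℝ => Real.exp (-ξ * y ^ 2 / 2) * y ^ ((1 : ℝ) / 2 + ν) *
        kummerM (-((lam - 2 * ξ * (1 + ν)) / (4 * ξ))) (1 + ν) (ξ * y ^ 2)) x) ∧
    (∀ x : ℝ, 0 < x → DifferentiableAt ℝ
      (deriv (fun y : ℝ => Real.exp (-ξ * y ^ 2 / 2) * y ^ ((1 : ℝ) / 2 + ν) *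
        kummerM (-((lam - 2 * ξ * (1 + ν)) / (4 * ξ))) (1 + ν) (ξ * y ^ 2))) x) ∧
    (∀ x : ℝ, 0 < x →
      -deriv (deriv (fun y : ℝ => Real.exp (-ξ * y ^ 2 / 2) * y ^ ((1 : ℝ) / 2 + ν) *
          kummerM (-((lam - 2 * ξ * (1 + ν)) / (4 * ξ))) (1 + ν) (ξ * y ^ 2))) x
        + ξ ^ 2 * x ^ 2 *
          (Real.exp (-ξ * x ^ 2 / 2) * x ^ ((1 : ℝ) / 2 + ν) *
            kummerM (-((lam - 2 * ξ * (1 + ν)) / (4 * ξ))) (1 + ν) (ξ * x ^ 2))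
        + ((ν ^ 2 - 1 / 4) / x ^ 2) *
          (Real.exp (-ξ * x ^ 2 / 2) * x ^ ((1 : ℝ) / 2 + ν) *
            kummerM (-((lam - 2 * ξ * (1 + ν)) / (4 * ξ))) (1 + ν) (ξ * x ^ 2))
        = lam * (Real.exp (-ξ * x ^ 2 / 2) * x ^ ((1 : ℝ) / 2 + ν) *
            kummerM (-((lam - 2 * ξ * (1 + ν)) / (4 * ξ))) (1 + ν) (ξ * x ^ 2))) := by
  have hν' (n : ℕ) : 1 + ν ≠ -n := by linarith [n.cast_nonneg (α := ℝ)]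
  have key {x : ℝ} (hx : 0 < x) :=
    kummer_ansatz_solves_eigenvalue_equation_general ν ξ lam hν' hξ.ne' hx
  exact ⟨fun _ hx ↦ (key hx).1.differentiableAt, fun _ hx ↦ (key hx).1.deriv.differentiableAt,
    fun _ hx ↦ (key hx).2⟩
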